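/- arXiv:1902.09267 — 2 statements merged into one kernel-verified Lean document; each statement's English description precedes it below -/
import Mathlib

section
/- Let ℓ > 0 and σ ∈ (0,1) ∪ (1,2). For each integer k ≥ 1 define φ_k(x) := λ_k · x(ℓ-x) · P_k^{(1,1)}(2x/ℓ - 1) with λ_k = (k+2)(2k+3)/(ℓ³(k+1)). Then for every x ∈ (0, ℓ], the left Riemann–Liouville fractional derivative of order σ of φ_k exists at x and equals x^{1-σ} · [ ((2k+3)Γ(k+3))/(ℓ²(k+1)Γ(k+2-σ)) · P_k^{(1+σ,1-σ)}(2x/ℓ-1) − ((k+2)Γ(k+4))/(ℓ³(k+1)Γ(k+3-σ)) · x · P_k^{(1+σ,2-σ)}(2x/ℓ-1) − (Γ(k+3))/(ℓ³Γ(k+2-σ)) · x · P_{k-1}^{(1+σ,2-σ)}(2x/ℓ-1) ]. -/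
/-!
Writing `φ_k = λ_k ℓ x P_k^{(1,1)} - λ_k x² P_k^{(1,1)}`, the closed form comes from the rule
`D^σ (x^b P_j^{(a,b)}(2x/ℓ-1)) = Γ(j+b+1)/Γ(j+b+1-σ) x^{b-σ} P_j^{(a+σ,b-σ)}(2x/ℓ-1)`, applied with
`b = 1` to the first term, and with `b = 2` to the second one after the contiguous relation
`(2k+3) P_k^{(1,1)} = (k+3) P_k^{(1,2)} + (k+1) P_{k-1}^{(1,2)}`.

Everything is checked on coefficients. `jacobiP_eq_sum` derives from the three-term recurrence the
explicit expansion of `P_j^{(a,b)}(2u-1)` in powers of `u`, with coefficients `jacobiCoef` built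
from Gamma functions. `leftRL_polynomial` computes the fractional derivative of a polynomial
termwise: the fractional integral is a Beta integral, and the `m` classical derivatives are taken
on the whole half-line `y > 0`, where the functions `y^q / Γ(q+1)` are simply shifted in `q`.
The rule for `D^σ` and the contiguous relation become the Gamma-function identities
`jacobiCoef_shift` and `jacobiCoef_contiguous`.
-/

/-- Coefficient `A_j^{a,b}` in the three-term recurrence of Jacobi polynomials. -/
noncomputable def jacobiA (a b : ℝ) (j : ℕ) : ℝ :=
  (a + b + 2*j + 1) * (a + b + 2*j + 2) / (2*(j+1)*(a + b + j + 1))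

/-- Coefficient `B_j^{a,b}` in the three-term recurrence of Jacobi polynomials. -/
noncomputable def jacobiB (a b : ℝ) (j : ℕ) : ℝ :=
  (b^2 - a^2) * (a + b + 2*j + 1) / (2*(j+1)*(a + b + j + 1)*(a + b + 2*j))

/-- Coefficient `C_j^{a,b}` in the three-term recurrence of Jacobi polynomials. -/
noncomputable def jacobiC (a b : ℝ) (j : ℕ) : ℝ :=
  (a + j)*(b + j)*(a + b + 2*j + 2) / ((j+1)*(a + b + j + 1)*(a + b + 2*j))

/-- The Jacobi polynomial `P_j^{(a,b)}(x)` defined via the three-term recurrence. -/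
noncomputable def jacobiP (a b : ℝ) : ℕ → ℝ → ℝ
  | 0, _ => 1
  | 1, x => ((a + b + 2)*x + a - b)/2
  | (j+2), x =>
      (jacobiA a b (j+1) * x - jacobiB a b (j+1)) * jacobiP a b (j+1) x
        - jacobiC a b (j+1) * jacobiP a b j x

/-- The function whose `m`-th derivative is the left Riemann–Liouville fractional
derivative of order `σ` of `g` (with base point 0), i.e.
`y ↦ (1/Γ(m-σ)) ∫₀ʸ (y-t)^{m-σ-1} g(t) dt`. -/
noncomputable def leftRLFun (σ : ℝ) (m : ℕ) (g : ℝ → ℝ) : ℝ → ℝ :=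
  fun y => (1 / Real.Gamma ((m : ℝ) - σ)) * ∫ t in (0:ℝ)..y, (y - t) ^ ((m : ℝ) - σ - 1) * g t

/-- The function whose `m`-th derivative is the right Riemann–Liouville fractional
derivative of order `σ` of `g` on `[·, ℓ]`, i.e.
`y ↦ ((-1)^m/Γ(m-σ)) ∫ᵧ^ℓ (t-y)^{m-σ-1} g(t) dt`. -/
noncomputable def rightRLFun (σ : ℝ) (m : ℕ) (ℓ : ℝ) (g : ℝ → ℝ) : ℝ → ℝ :=
  fun y => ((-1:ℝ)^m / Real.Gamma ((m : ℝ) - σ)) * ∫ t in y..ℓ, (t - y) ^ ((m : ℝ) - σ - 1) * g t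

/-- `F` has derivatives up to order `m` at `x` (so that `iteratedDeriv m F x`
is a genuine `m`-th derivative). -/
def HasIterDerivAt (m : ℕ) (F : ℝ → ℝ) (x : ℝ) : Prop :=
  ∀ j < m, DifferentiableAt ℝ (iteratedDeriv j F) x

/-- Normalization constant `λ_k`. -/
noncomputable def lamCoef (ℓ : ℝ) (k : ℕ) : ℝ := (k+2)*(2*k+3)/(ℓ^3*(k+1))

/-- The basis function `φ_k(x) = λ_k x(ℓ-x) P_k^{(1,1)}(2x/ℓ - 1)`. -/
noncomputable def phiFun (ℓ : ℝ) (k : ℕ) (x : ℝ) : ℝ :=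
  lamCoef ℓ k * (x*(ℓ-x)) * jacobiP 1 1 k (2*x/ℓ - 1)

open Finset

/-! ### Explicit coefficients of the Jacobi polynomials -/

/-- The functional equation of `1 / Γ`. It has no exceptional points: at the poles of `Γ` the
convention `Γ = 0`, `0⁻¹ = 0` gives `1 / Γ` its analytic value `0`. -/
theorem inv_Gamma_eq (z : ℝ) : (Real.Gamma z)⁻¹ = z * (Real.Gamma (z + 1))⁻¹ := by
  rcases eq_or_ne z 0 with rfl | h
  · simp [Real.Gamma_zero]
  · rw [Real.Gamma_add_one h, mul_inv, mul_inv_cancel_left₀ h]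

/-- The coefficient, up to the sign `(-1)^(j+i)`, of `u^i` in `P_j^{(a,b)}(2u - 1)`, where
`s = a + b`. The indices are real and the denominators are reciprocal Gamma functions, so that the
coefficient vanishes of itself for `i > j` and for `i = -1`, and recurrences in `i` and `j` need
no boundary cases. -/
noncomputable def jacobiCoef (s b j i : ℝ) : ℝ :=
  Real.Gamma (j + b + 1) * Real.Gamma (j + s + 1 + i) * (Real.Gamma (i + b + 1))⁻¹ *
    (Real.Gamma (j + s + 1))⁻¹ * (Real.Gamma (i + 1))⁻¹ * (Real.Gamma (j - i + 1))⁻¹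

theorem jacobiCoef_eq_zero (s b : ℝ) (j i : ℕ) (h : j < i) : jacobiCoef s b j i = 0 := by
  obtain ⟨d, rfl⟩ := Nat.exists_eq_add_of_lt h
  have : Real.Gamma ((j : ℝ) - ((j + d + 1 : ℕ) : ℝ) + 1) = 0 := by
    rw [← Real.Gamma_neg_nat_eq_zero d]; congr 1; push_cast; ring
  rw [jacobiCoef, this]; simp

theorem jacobiCoef_neg_one (s b j : ℝ) : jacobiCoef s b j (-1) = 0 := by
  simp [jacobiCoef, Real.Gamma_zero]

/-- The three-term recurrence of the Jacobi polynomials, read off at the coefficient of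
`(-u)^i`. -/
theorem jacobiCoef_rec (a b : ℝ) (n : ℕ) (i : ℝ) (hi : 0 ≤ i) (hb : -1 < b) (hs : 0 < a + b) :
    jacobiCoef (a + b) b (n + 1 + 1) i =
      (jacobiA a b (n + 1) + jacobiB a b (n + 1)) * jacobiCoef (a + b) b (n + 1) i
        + 2 * jacobiA a b (n + 1) * jacobiCoef (a + b) b (n + 1) (i - 1)
        - jacobiC a b (n + 1) * jacobiCoef (a + b) b n i := by
  obtain ⟨s, rfl⟩ : ∃ s, a = s - b := ⟨a + b, by ring⟩
  simp only [sub_add_cancel] at hs ⊢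
  have hn : (0:ℝ) ≤ n := Nat.cast_nonneg n
  have g1 : Real.Gamma (n + b + 1 + 1) = (n + b + 1) * Real.Gamma (n + b + 1) :=
    Real.Gamma_add_one (by linarith)
  have g2 : Real.Gamma (n + b + 1 + 1 + 1) = (n + b + 1 + 1) * Real.Gamma (n + b + 1 + 1) :=
    Real.Gamma_add_one (by linarith)
  have g3 : Real.Gamma (n + s + 1 + i + 1) = (n + s + 1 + i) * Real.Gamma (n + s + 1 + i) :=
    Real.Gamma_add_one (by linarith)
  have g4 : Real.Gamma (n + s + 1 + i + 1 + 1)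
      = (n + s + 1 + i + 1) * Real.Gamma (n + s + 1 + i + 1) :=
    Real.Gamma_add_one (by linarith)
  have g5 : Real.Gamma (n + s + 1 + 1) = (n + s + 1) * Real.Gamma (n + s + 1) :=
    Real.Gamma_add_one (by linarith)
  have g6 : Real.Gamma (n + s + 1 + 1 + 1) = (n + s + 1 + 1) * Real.Gamma (n + s + 1 + 1) :=
    Real.Gamma_add_one (by linarith)
  have r1 := inv_Gamma_eq (i + b)
  have r2 := inv_Gamma_eq i
  have r3 := inv_Gamma_eq (n - i + 1)
  have r4 := inv_Gamma_eq (n - i + 1 + 1)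
  have hG5 : Real.Gamma (n + s + 1) ≠ 0 := (Real.Gamma_pos_of_pos (by linarith)).ne'
  have c1 : jacobiCoef s b (n + 1 + 1) i = Real.Gamma (n + b + 1 + 1 + 1) *
      Real.Gamma (n + s + 1 + i + 1 + 1) * (Real.Gamma (i + b + 1))⁻¹ *
      (Real.Gamma (n + s + 1 + 1 + 1))⁻¹ * (Real.Gamma (i + 1))⁻¹ *
      (Real.Gamma (n - i + 1 + 1 + 1))⁻¹ := by
    unfold jacobiCoef; ring_nf
  have c2 : jacobiCoef s b (n + 1) i = Real.Gamma (n + b + 1 + 1) *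
      Real.Gamma (n + s + 1 + i + 1) * (Real.Gamma (i + b + 1))⁻¹ *
      (Real.Gamma (n + s + 1 + 1))⁻¹ * (Real.Gamma (i + 1))⁻¹ *
      (Real.Gamma (n - i + 1 + 1))⁻¹ := by
    unfold jacobiCoef; ring_nf
  have c3 : jacobiCoef s b (n + 1) (i - 1) = Real.Gamma (n + b + 1 + 1) *
      Real.Gamma (n + s + 1 + i) * (Real.Gamma (i + b))⁻¹ *
      (Real.Gamma (n + s + 1 + 1))⁻¹ * (Real.Gamma i)⁻¹ *
      (Real.Gamma (n - i + 1 + 1 + 1))⁻¹ := by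
    unfold jacobiCoef; ring_nf
  have c4 : jacobiCoef s b n i = Real.Gamma (n + b + 1) *
      Real.Gamma (n + s + 1 + i) * (Real.Gamma (i + b + 1))⁻¹ *
      (Real.Gamma (n + s + 1))⁻¹ * (Real.Gamma (i + 1))⁻¹ *
      (Real.Gamma (n - i + 1))⁻¹ := by
    unfold jacobiCoef; ring_nf
  rw [c1, c2, c3, c4, r3, r4, r1, r2, g4, g3, g2, g1, g6, g5, jacobiA, jacobiB, jacobiC]
  push_cast
  generalize (Real.Gamma (n - i + 1 + 1 + 1))⁻¹ = R3
  generalize (Real.Gamma (i + 1))⁻¹ = R2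
  generalize (Real.Gamma (i + b + 1))⁻¹ = R1
  generalize Real.Gamma (n + s + 1 + i) = G3
  generalize Real.Gamma (n + b + 1) = G1
  generalize Real.Gamma (n + s + 1) = G5 at *
  have e : s - b + b = s := by ring
  simp only [e]
  generalize (n : ℝ) = n at *
  have h1 : n + s + 1 ≠ 0 := by linarith
  have h2 : n + s + 1 + 1 ≠ 0 := by linarith
  have h3 : s + 2 * (n + 1) ≠ 0 := by linarith
  have h4 : s + (n + 1) + 1 ≠ 0 := by linarith
  have h5 : n + 1 + 1 ≠ 0 := by linarith
  clear r1 r2 r3 r4 g1 g2 g3 g4 g5 g6 c1 c2 c3 c4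
  field_simp
  ring

/-- The expansion of `P_j^{(a,b)}` about `-1`. Any summation bound `N > j` is allowed, since the
coefficients beyond `j` vanish. -/
theorem jacobiP_eq_sum (a b u : ℝ) (hb : -1 < b) (hs : 0 < a + b) (j : ℕ) :
    ∀ N, j < N → jacobiP a b j (2 * u - 1) =
      (-1) ^ j * ∑ i ∈ range N, jacobiCoef (a + b) b j i * (-u) ^ i := by
  have key : ∀ j N : ℕ, j + 1 ≤ N →
      ∑ i ∈ range N, jacobiCoef (a + b) b j i * (-u) ^ i =
      ∑ i ∈ range (j + 1), jacobiCoef (a + b) b j i * (-u) ^ i := by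
    intro j N h
    refine (sum_subset (range_subset_range.2 h) fun i _ hi => ?_).symm
    rw [jacobiCoef_eq_zero _ _ _ _ (by simpa using hi), zero_mul]
  have Gb : Real.Gamma (b + 1) ≠ 0 := (Real.Gamma_pos_of_pos (by linarith)).ne'
  have Gs : Real.Gamma (a + b + 1) ≠ 0 := (Real.Gamma_pos_of_pos (by linarith)).ne'
  have Gs1 := Real.Gamma_add_one (s := a + b + 1) (by linarith)
  induction j using Nat.twoStepInduction with
  | zero =>
    intro N hN
    rw [key _ _ hN]
    simp [jacobiP, jacobiCoef]
    field_simp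
  | one =>
    intro N hN
    rw [key _ _ hN]
    have Gb1 := Real.Gamma_add_one (s := b + 1) (by linarith)
    have Gs2 := Real.Gamma_add_one (s := a + b + 1 + 1) (by linarith)
    have Gb2 : Real.Gamma (b + 1 + 1) ≠ 0 := (Real.Gamma_pos_of_pos (by linarith)).ne'
    have Gs3 : Real.Gamma (a + b + 1 + 1) ≠ 0 := (Real.Gamma_pos_of_pos (by linarith)).ne'
    have c0 : jacobiCoef (a + b) b 1 0 = b + 1 := by
      simp [jacobiCoef, one_add_one_eq_two]
      rw [show 1 + b + 1 = b + 1 + 1 by ring, show 1 + (a + b) + 1 = a + b + 1 + 1 by ring, Gb1]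
      field_simp
    have c1 : jacobiCoef (a + b) b 1 1 = a + b + 2 := by
      simp [jacobiCoef, one_add_one_eq_two]
      rw [show 1 + b + 1 = b + 1 + 1 by ring, show 1 + (a + b) + 1 = a + b + 1 + 1 by ring, Gs2]
      field_simp
      ring
    simp [sum_range_succ, jacobiP, c0, c1]
    ring
  | more j ih0 ih1 =>
    intro N hN
    have i0 := ih0 N (by omega)
    have i1 := ih1 N (by omega)
    have shift : (-u) * ∑ i ∈ range N, jacobiCoef (a + b) b ((j + 1 : ℕ) : ℝ) i * (-u) ^ i =
        ∑ i ∈ range N, jacobiCoef (a + b) b ((j + 1 : ℕ) : ℝ) ((i : ℝ) - 1) * (-u) ^ i := by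
      obtain ⟨M, rfl⟩ : ∃ M, N = M + 1 := ⟨N - 1, by omega⟩
      rw [sum_range_succ, sum_range_succ', jacobiCoef_eq_zero _ _ _ M (by omega)]
      simp only [Nat.cast_zero, zero_sub, jacobiCoef_neg_one, zero_mul, add_zero, mul_sum]
      refine sum_congr rfl fun i _ => ?_
      push_cast
      rw [add_sub_cancel_right]
      ring
    have rec' : ∑ i ∈ range N, jacobiCoef (a + b) b ((j + 2 : ℕ) : ℝ) i * (-u) ^ i =
        (jacobiA a b (j + 1) + jacobiB a b (j + 1)) *
          ∑ i ∈ range N, jacobiCoef (a + b) b ((j + 1 : ℕ) : ℝ) i * (-u) ^ i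
        + 2 * jacobiA a b (j + 1) *
          ∑ i ∈ range N, jacobiCoef (a + b) b ((j + 1 : ℕ) : ℝ) ((i : ℝ) - 1) * (-u) ^ i
        - jacobiC a b (j + 1) * ∑ i ∈ range N, jacobiCoef (a + b) b j i * (-u) ^ i := by
      simp only [mul_sum, ← sum_add_distrib, ← sum_sub_distrib]
      refine sum_congr rfl fun i _ => ?_
      have := jacobiCoef_rec a b j i (Nat.cast_nonneg i) hb hs
      rw [show ((j + 2 : ℕ) : ℝ) = j + 1 + 1 by push_cast; ring, this]
      push_cast
      ring
    rw [rec', ← shift, jacobiP, i0, i1]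
    ring

open MeasureTheory

/-! ### Riemann–Liouville derivatives of polynomials -/
/-- The Beta integral, rescaled to `[0, y]`. -/
theorem integral_pow_kernel (α y : ℝ) (p : ℕ) (hα : 0 < α) (hy : 0 < y) :
    ∫ t in (0:ℝ)..y, (y - t) ^ (α - 1) * t ^ p =
      Real.Gamma α * Real.Gamma (p + 1) * (Real.Gamma (p + α + 1))⁻¹ * y ^ ((p : ℝ) + α) := by
  have h := Complex.betaIntegral_scaled ((p + 1 : ℝ) : ℂ) (α : ℂ) hy
  have hp : (0:ℝ) < p + 1 := by positivity
  rw [Complex.betaIntegral_eq_Gamma_mul_div _ _ (by simpa using hp) (by simpa using hα)] at h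
  have e : ∫ x in (0:ℝ)..y, (x : ℂ) ^ (((p + 1 : ℝ) : ℂ) - 1) * ((y : ℂ) - x) ^ ((α : ℂ) - 1)
      = ((∫ t in (0:ℝ)..y, (y - t) ^ (α - 1) * t ^ p : ℝ) : ℂ) := by
    rw [← intervalIntegral.integral_ofReal]
    refine intervalIntegral.integral_congr fun t ht => ?_
    rw [Set.uIcc_of_le hy.le] at ht
    have : (0:ℝ) ≤ y - t := by linarith [ht.2]
    rw [Complex.ofReal_mul, Complex.ofReal_cpow this, mul_comm]
    push_cast
    simp
  rw [e, ← Complex.ofReal_add, Complex.Gamma_ofReal, Complex.Gamma_ofReal, Complex.Gamma_ofReal,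
    show (((p + 1 + α : ℝ) : ℂ) - 1) = (((p : ℝ) + α : ℝ) : ℂ) by push_cast; ring,
    ← Complex.ofReal_cpow hy.le] at h
  have h' : ∫ t in (0:ℝ)..y, (y - t) ^ (α - 1) * t ^ p = y ^ ((p : ℝ) + α) *
      (Real.Gamma (p + 1) * Real.Gamma α / Real.Gamma (p + 1 + α)) := by exact_mod_cast h
  rw [h', show (p : ℝ) + 1 + α = p + α + 1 by ring]
  ring

theorem intervalIntegrable_kernel (α y : ℝ) (hα : 0 < α) (p : ℕ) :
    IntervalIntegrable (fun t : ℝ => (y - t) ^ (α - 1) * t ^ p) volume 0 y := by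
  have h := (intervalIntegral.intervalIntegrable_rpow' (r := α - 1) (by linarith)
    (a := 0) (b := y)).comp_sub_left y
  simp only [sub_zero, sub_self] at h
  exact h.symm.mul_continuousOn (by fun_prop)

theorem leftRLFun_sum {ι : Type*} (S : Finset ι) (c : ι → ℝ) (p : ι → ℕ) (σ : ℝ) (m : ℕ)
    (hm : σ < m) (g : ℝ → ℝ) (hg : ∀ t, g t = ∑ i ∈ S, c i * t ^ p i) (y : ℝ) (hy : 0 < y) :
    leftRLFun σ m g y = ∑ i ∈ S, c i * Real.Gamma (p i + 1) *
      (Real.Gamma (p i + (m - σ) + 1))⁻¹ * y ^ ((p i : ℝ) + (m - σ)) := by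
  have hα : 0 < (m : ℝ) - σ := by linarith
  have hΓ : Real.Gamma ((m : ℝ) - σ) ≠ 0 := (Real.Gamma_pos_of_pos hα).ne'
  have e : ∀ t, (y - t) ^ ((m : ℝ) - σ - 1) * g t
      = ∑ i ∈ S, c i * ((y - t) ^ ((m : ℝ) - σ - 1) * t ^ p i) := fun t => by
    rw [hg, Finset.mul_sum]
    exact Finset.sum_congr rfl fun i _ => by ring
  simp only [leftRLFun, e]
  rw [intervalIntegral.integral_finsetSum
    fun i _ => (intervalIntegrable_kernel _ y hα (p i)).const_mul _, Finset.mul_sum]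
  refine Finset.sum_congr rfl fun i _ => ?_
  rw [intervalIntegral.integral_const_mul, integral_pow_kernel _ _ _ hα hy]
  field_simp

/-- With the normalization `y^q / Γ(q+1)`, differentiation lowers `q` by one and introduces no
factor, also when `q` or `q + 1` is a pole of `Γ`. -/
theorem hasDerivAt_sum_rpow {ι : Type*} (S : Finset ι) (d q : ι → ℝ) (y : ℝ) (hy : 0 < y) :
    HasDerivAt (fun y => ∑ i ∈ S, d i * (Real.Gamma (q i + 1))⁻¹ * y ^ q i)
      (∑ i ∈ S, d i * (Real.Gamma (q i))⁻¹ * y ^ (q i - 1)) y := by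
  refine HasDerivAt.fun_sum fun i _ => ?_
  have := (Real.hasDerivAt_rpow_const (p := q i) (Or.inl hy.ne')).const_mul
    (d i * (Real.Gamma (q i + 1))⁻¹)
  convert! this using 1
  rw [inv_Gamma_eq (q i)]
  ring

theorem iteratedDeriv_sum_rpow {ι : Type*} (S : Finset ι) (d q : ι → ℝ) (F : ℝ → ℝ)
    (hF : ∀ y, 0 < y → F y = ∑ i ∈ S, d i * (Real.Gamma (q i + 1))⁻¹ * y ^ q i) (j : ℕ) :
    ∀ y, 0 < y → iteratedDeriv j F y =
      ∑ i ∈ S, d i * (Real.Gamma (q i - j + 1))⁻¹ * y ^ (q i - j) ∧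
      DifferentiableAt ℝ (iteratedDeriv j F) y := by
  suffices H : ∀ y, 0 < y → iteratedDeriv j F y =
      ∑ i ∈ S, d i * (Real.Gamma (q i - j + 1))⁻¹ * y ^ (q i - j) by
    intro y hy
    refine ⟨H y hy, ?_⟩
    refine (hasDerivAt_sum_rpow S d (fun i => q i - j) y hy).differentiableAt.congr_of_eventuallyEq
      ?_
    filter_upwards [lt_mem_nhds hy] with z hz using H z hz
  induction j with
  | zero => simpa using hF
  | succ j ih =>
    intro y hy
    have hev : iteratedDeriv j F =ᶠ[nhds y]
        fun y => ∑ i ∈ S, d i * (Real.Gamma (q i - j + 1))⁻¹ * y ^ (q i - j) := by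
      filter_upwards [lt_mem_nhds hy] with z hz using ih z hz
    rw [iteratedDeriv_succ, hev.deriv_eq,
      (hasDerivAt_sum_rpow S d (fun i => q i - j) y hy).deriv]
    refine Finset.sum_congr rfl fun i _ => ?_
    push_cast
    rw [show q i - ((j : ℝ) + 1) + 1 = q i - j by ring,
      show q i - ((j : ℝ) + 1) = q i - j - 1 by ring]

/-- The termwise rule `D^σ t^p = Γ(p+1) / Γ(p+1-σ) x^{p-σ}` for finite combinations of natural
powers. -/
theorem leftRL_polynomial {ι : Type*} (S : Finset ι) (c : ι → ℝ) (p : ι → ℕ) (σ : ℝ) (m : ℕ)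
    (hm : σ < m) (g : ℝ → ℝ) (hg : ∀ t, g t = ∑ i ∈ S, c i * t ^ p i) (x : ℝ) (hx : 0 < x) :
    HasIterDerivAt m (leftRLFun σ m g) x ∧
    iteratedDeriv m (leftRLFun σ m g) x = ∑ i ∈ S, c i * Real.Gamma (p i + 1) *
      (Real.Gamma (p i - σ + 1))⁻¹ * x ^ ((p i : ℝ) - σ) := by
  have H := iteratedDeriv_sum_rpow S (fun i => c i * Real.Gamma (p i + 1))
    (fun i => (p i : ℝ) + (m - σ)) _ (leftRLFun_sum S c p σ m hm g hg)
  refine ⟨fun j _ => (H j x hx).2, ?_⟩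
  rw [(H m x hx).1]
  refine Finset.sum_congr rfl fun i _ => ?_
  rw [show (p i : ℝ) + (m - σ) - m = p i - σ by ring]

/-! ### The closed form for `φ_k` -/

/-- The factor `Γ(i+b+1) / Γ(i+b+1-σ)` that `D^σ` puts on `x^{b+i}` turns the coefficients of
`P_j^{(a,b)}` into a multiple, independent of `i`, of those of `P_j^{(a+σ,b-σ)}`. -/
theorem jacobiCoef_shift (s b σ : ℝ) (j : ℕ) (i : ℕ) (hb : -1 < b) (hσ : σ < b + 1) :
    Real.Gamma (i + b + 1) * (Real.Gamma (i + b + 1 - σ))⁻¹ * jacobiCoef s b j i =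
      Real.Gamma (j + b + 1) * (Real.Gamma (j + b + 1 - σ))⁻¹ * jacobiCoef s (b - σ) j i := by
  have hi : (0:ℝ) ≤ i := Nat.cast_nonneg i
  have hj : (0:ℝ) ≤ j := Nat.cast_nonneg j
  have h1 : Real.Gamma (i + b + 1) ≠ 0 := (Real.Gamma_pos_of_pos (by linarith)).ne'
  have h2 : Real.Gamma (j + b + 1 - σ) ≠ 0 := (Real.Gamma_pos_of_pos (by linarith)).ne'
  rw [jacobiCoef, jacobiCoef, show (i : ℝ) + (b - σ) + 1 = i + b + 1 - σ by ring,
    show (j : ℝ) + (b - σ) + 1 = j + b + 1 - σ by ring]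
  field_simp

/-- Coefficientwise form of the contiguous relation
`(2k+3) P_k^{(1,1)} = (k+3) P_k^{(1,2)} + (k+1) P_{k-1}^{(1,2)}` with `k = n + 1`. The sign of the
last term flips because `jacobiCoef` omits `(-1)^(j+i)`. -/
theorem jacobiCoef_contiguous (n : ℕ) (i : ℕ) :
    (2 * (n : ℝ) + 5) * jacobiCoef 2 1 (n + 1) i =
      (n + 4) * jacobiCoef 3 2 (n + 1) i - (n + 2) * jacobiCoef 3 2 n i := by
  have hi : (0:ℝ) ≤ i := Nat.cast_nonneg i
  have hn : (0:ℝ) ≤ n := Nat.cast_nonneg n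
  have g1 : Real.Gamma (n + 3 + 1) = (n + 3) * Real.Gamma (n + 3) :=
    Real.Gamma_add_one (by linarith)
  have g2 : Real.Gamma (n + 4 + i + 1) = (n + 4 + i) * Real.Gamma (n + 4 + i) :=
    Real.Gamma_add_one (by linarith)
  have g3 : Real.Gamma (n + 4 + 1) = (n + 4) * Real.Gamma (n + 4) :=
    Real.Gamma_add_one (by linarith)
  have r1 := inv_Gamma_eq (i + 2)
  have r2 := inv_Gamma_eq (n - i + 1)
  have hG : Real.Gamma (n + 4) ≠ 0 := (Real.Gamma_pos_of_pos (by linarith)).ne'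
  have c1 : jacobiCoef 2 1 (n + 1) i = Real.Gamma (n + 3) * Real.Gamma (n + 4 + i) *
      (Real.Gamma (i + 2))⁻¹ * (Real.Gamma (n + 4))⁻¹ * (Real.Gamma (i + 1))⁻¹ *
      (Real.Gamma (n - i + 1 + 1))⁻¹ := by
    unfold jacobiCoef; ring_nf
  have c2 : jacobiCoef 3 2 (n + 1) i = Real.Gamma (n + 3 + 1) * Real.Gamma (n + 4 + i + 1) *
      (Real.Gamma (i + 2 + 1))⁻¹ * (Real.Gamma (n + 4 + 1))⁻¹ * (Real.Gamma (i + 1))⁻¹ *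
      (Real.Gamma (n - i + 1 + 1))⁻¹ := by
    unfold jacobiCoef; ring_nf
  have c3 : jacobiCoef 3 2 n i = Real.Gamma (n + 3) * Real.Gamma (n + 4 + i) *
      (Real.Gamma (i + 2 + 1))⁻¹ * (Real.Gamma (n + 4))⁻¹ * (Real.Gamma (i + 1))⁻¹ *
      (Real.Gamma (n - i + 1))⁻¹ := by
    unfold jacobiCoef; ring_nf
  rw [c1, c2, c3, r1, r2, g1, g2, g3]
  have h4 : (n : ℝ) + 4 ≠ 0 := by linarith
  field_simp
  ring

/-- The monomial expansion of `φ_{n+1}`, split as `λ ℓ t P - λ t² P`: the left summand of the index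
type carries the powers `t^{i+1}`, the right one the powers `t^{i+2}`. -/
theorem phiFun_eq_sum (ℓ : ℝ) (n : ℕ) (t : ℝ) :
    phiFun ℓ (n + 1) t = ∑ e ∈ (range (n + 2)).disjSum (range (n + 2)),
      Sum.elim
        (fun i : ℕ => (-1) ^ (n + 1) * lamCoef ℓ (n + 1) * ℓ * jacobiCoef 2 1 (n + 1) i
          * (-ℓ⁻¹) ^ i)
        (fun i : ℕ => -((-1) ^ (n + 1) * lamCoef ℓ (n + 1) * jacobiCoef 2 1 (n + 1) i
          * (-ℓ⁻¹) ^ i)) e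
        * t ^ (Sum.elim (fun i : ℕ => i + 1) (fun i : ℕ => i + 2) e : ℕ) := by
  have h := jacobiP_eq_sum 1 1 (t / ℓ) (by norm_num) (by norm_num) (n + 1) (n + 2) (by omega)
  rw [sum_disjSum, phiFun, show 2 * t / ℓ - 1 = 2 * (t / ℓ) - 1 by ring, h, ← sum_add_distrib,
    mul_sum, mul_sum]
  refine sum_congr rfl fun i _ => ?_
  simp only [Sum.elim_inl, Sum.elim_inr]
  rw [show -(t / ℓ) = t * (-ℓ⁻¹) by ring, mul_pow]
  norm_num
  ring

/-- Closed form of the left Riemann–Liouville fractional derivative of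
order `σ ∈ (0,1) ∪ (1,2)` of `φ_k` (`k ≥ 1`) at `x ∈ (0, ℓ]`. -/
theorem left_RL_phiFun_closed_form
    (ℓ σ : ℝ) (hℓ : 0 < ℓ) (hσ : σ ∈ Set.Ioo (0:ℝ) 1 ∪ Set.Ioo (1:ℝ) 2)
    (m : ℕ) (hm : (m : ℝ) - 1 ≤ σ ∧ σ < m)
    (k : ℕ) (hk : 1 ≤ k) (x : ℝ) (hx : x ∈ Set.Ioc 0 ℓ) :
    HasIterDerivAt m (leftRLFun σ m (phiFun ℓ k)) x ∧
    iteratedDeriv m (leftRLFun σ m (phiFun ℓ k)) x =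
      x ^ (1 - σ) *
        ( (2*(k:ℝ)+3) * Real.Gamma ((k:ℝ)+3) / (ℓ^2*((k:ℝ)+1)*Real.Gamma ((k:ℝ)+2-σ)) *
            jacobiP (1+σ) (1-σ) k (2*x/ℓ - 1)
          - ((k:ℝ)+2) * Real.Gamma ((k:ℝ)+4) / (ℓ^3*((k:ℝ)+1)*Real.Gamma ((k:ℝ)+3-σ)) *
            x * jacobiP (1+σ) (2-σ) k (2*x/ℓ - 1)
          - Real.Gamma ((k:ℝ)+3) / (ℓ^3*Real.Gamma ((k:ℝ)+2-σ)) *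
            x * jacobiP (1+σ) (2-σ) (k-1) (2*x/ℓ - 1) ) := by
  obtain ⟨n, rfl⟩ : ∃ n, k = n + 1 := ⟨k - 1, by omega⟩
  have hσ2 : σ < 2 := by
    rcases hσ with h | h
    · linarith [h.2]
    · exact h.2
  have hx0 : 0 < x := hx.1
  have hn : (0:ℝ) ≤ n := Nat.cast_nonneg n
  obtain ⟨H1, H2⟩ := leftRL_polynomial _ _ _ σ m hm.2 _ (phiFun_eq_sum ℓ n) x hx0
  refine ⟨H1, ?_⟩
  rw [H2, sum_disjSum, ← sum_add_distrib, Nat.add_sub_cancel,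
    show 2 * x / ℓ - 1 = 2 * (x / ℓ) - 1 by ring,
    jacobiP_eq_sum (1 + σ) (1 - σ) (x / ℓ) (by linarith) (by linarith) (n + 1) (n + 2) (by omega),
    jacobiP_eq_sum (1 + σ) (2 - σ) (x / ℓ) (by linarith) (by linarith) (n + 1) (n + 2) (by omega),
    jacobiP_eq_sum (1 + σ) (2 - σ) (x / ℓ) (by linarith) (by linarith) n (n + 2) (by omega)]
  simp only [mul_sum, ← sum_sub_distrib]
  refine sum_congr rfl fun i _ => ?_
  have hi : (0:ℝ) ≤ i := Nat.cast_nonneg i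
  simp only [Sum.elim_inl, Sum.elim_inr]
  have S1 := jacobiCoef_shift 2 1 σ (n + 1) i (by norm_num) (by linarith)
  have S2 := jacobiCoef_shift 3 2 σ (n + 1) i (by norm_num) (by linarith)
  have S3 := jacobiCoef_shift 3 2 σ n i (by norm_num) (by linarith)
  have K := jacobiCoef_contiguous n i
  have x1 : x ^ (((i + 1 : ℕ) : ℝ) - σ) = x ^ (1 - σ) * x ^ i := by
    rw [← Real.rpow_natCast x i, ← Real.rpow_add hx0]; congr 1; push_cast; ring
  have x2 : x ^ (((i + 2 : ℕ) : ℝ) - σ) = x ^ (1 - σ) * x * x ^ i := by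
    rw [← Real.rpow_natCast x i, ← Real.rpow_add_one hx0.ne', ← Real.rpow_add hx0]
    congr 1; push_cast; ring
  rw [x1, x2, show -(x / ℓ) = x * (-ℓ⁻¹) by ring, mul_pow,
    show 1 + σ + (1 - σ) = 2 by ring, show 1 + σ + (2 - σ) = 3 by ring, lamCoef]
  push_cast at S1 S2 S3 K ⊢
  have G3 : Real.Gamma (n + 4) = (n + 3) * Real.Gamma (n + 3) := by
    rw [← Real.Gamma_add_one (by linarith)]; congr 1; ring
  have G4 : Real.Gamma (n + 5) = (n + 4) * Real.Gamma (n + 4) := by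
    rw [← Real.Gamma_add_one (by linarith)]; congr 1; ring
  rw [show (n:ℝ) + 1 + 1 + 1 = n + 3 by ring, show (i:ℝ) + 1 + 1 = i + 2 by ring] at S1
  rw [show (n:ℝ) + 1 + 2 + 1 = n + 4 by ring, show (i:ℝ) + 2 + 1 = i + 3 by ring] at S2
  rw [show (n:ℝ) + 2 + 1 = n + 3 by ring, show (i:ℝ) + 2 + 1 = i + 3 by ring] at S3
  rw [show (i:ℝ) + 1 + 1 = i + 2 by ring, show (i:ℝ) + 1 - σ + 1 = i + 2 - σ by ring,
    show (i:ℝ) + 2 + 1 = i + 3 by ring, show (i:ℝ) + 2 - σ + 1 = i + 3 - σ by ring,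
    show (n:ℝ) + 1 + 3 = n + 4 by ring, show (n:ℝ) + 1 + 4 = n + 5 by ring,
    show (n:ℝ) + 1 + 2 - σ = n + 3 - σ by ring, G4]
  have K' : jacobiCoef 2 1 (n + 1) i = ((n + 4) * jacobiCoef 3 2 (n + 1) i
      - (n + 2) * jacobiCoef 3 2 n i) / (2 * (n : ℝ) + 5) := by
    rw [← K, mul_div_cancel_left₀ _ (by linarith)]
  have T1 : jacobiCoef 2 1 (n + 1) i * Real.Gamma (i + 2) * (Real.Gamma (i + 2 - σ))⁻¹ =
      Real.Gamma (n + 3) * (Real.Gamma (n + 3 - σ))⁻¹ * jacobiCoef 2 (1 - σ) (n + 1) i := by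
    rw [← S1]; ring
  -- The factor `x²` calls for the parameter `b = 2`, so the contiguous relation comes first.
  have T2 : jacobiCoef 2 1 (n + 1) i * Real.Gamma (i + 3) * (Real.Gamma (i + 3 - σ))⁻¹ =
      ((n + 4) * (Real.Gamma (n + 4) * (Real.Gamma (n + 4 - σ))⁻¹ *
          jacobiCoef 3 (2 - σ) (n + 1) i)
        - (n + 2) * (Real.Gamma (n + 3) * (Real.Gamma (n + 3 - σ))⁻¹ *
          jacobiCoef 3 (2 - σ) n i)) / (2 * (n : ℝ) + 5) := by
    rw [← S2, ← S3, K']; ring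
  have hG3 : Real.Gamma (n + 3 - σ) ≠ 0 := (Real.Gamma_pos_of_pos (by linarith)).ne'
  have hG4 : Real.Gamma (n + 4 - σ) ≠ 0 := (Real.Gamma_pos_of_pos (by linarith)).ne'
  have n1 : (n : ℝ) + 1 + 1 ≠ 0 := by linarith
  have n2 : 2 * (n : ℝ) + 5 ≠ 0 := by linarith
  have n3 : 2 * ((n : ℝ) + 1) + 3 ≠ 0 := by linarith
  trans (-1) ^ (n + 1) * (((n:ℝ) + 1 + 2) * (2 * (n + 1) + 3) / (ℓ ^ 3 * (n + 1 + 1))) *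
      (-ℓ⁻¹) ^ i * x ^ (1 - σ) * x ^ i *
      (ℓ * (jacobiCoef 2 1 (n + 1) i * Real.Gamma (i + 2) * (Real.Gamma (i + 2 - σ))⁻¹)
        - x * (jacobiCoef 2 1 (n + 1) i * Real.Gamma (i + 3) * (Real.Gamma (i + 3 - σ))⁻¹))
  · ring
  rw [T1, T2, G3]
  generalize (-ℓ⁻¹) ^ i = L
  field_simp
  ring
end

section
/- Let ℓ > 0, let n be a nonnegative integer, and let ξ_0, …, ξ_n ∈ (-1, 1) and w_0, …, w_n ∈ ℝ be nodes and weights such that ∑_{k=0}^n w_k p(ξ_k) = ∫₋₁¹ (1-x)(1+x) p(x) dx for every polynomial p of degree at most 2n. For each k let ξ̂_k := (ℓ/2)(ξ_k + 1), and define φ_i(x) := λ_i x(ℓ-x) P_i^{(1,1)}(2x/ℓ - 1) with λ_i = (i+2)(2i+3)/(ℓ³(i+1)). Let M be the (n+1)×(n+1) matrix with entries M_{ij} = φ_i(ξ̂_j) (rows and columns indexed 0 to n), and let N be the (n+1)×(n+1) matrix with entries N_{ij} = (ℓ w_i / (2(1-ξ_i)(1+ξ_i))) · P_j^{(1,1)}(ξ_i).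 Then M · N is the identity matrix; in particular M is invertible with M⁻¹ = N. -/
/-- The recurrence of `P_j^{(1,1)}` with its coefficients simplified; the `B` term vanishes. -/
lemma jacobiP_one_one_rec (j : ℕ) (x : ℝ) :
    jacobiP 1 1 (j+2) x =
      (2*j+5)*(j+3)/((j+2)*(j+4)) * x * jacobiP 1 1 (j+1) x
        - (j+3)/(j+4) * jacobiP 1 1 j x := by
  have hA : jacobiA 1 1 (j+1) = (2*j+5)*(j+3)/((j+2)*(j+4)) := by
    unfold jacobiA; push_cast
    have : (1:ℝ) + 1 + (j+1) + 1 ≠ 0 := by positivity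
    field_simp; ring
  have hB : jacobiB 1 1 (j+1) = 0 := by simp [jacobiB]
  have hC : jacobiC 1 1 (j+1) = (j+3)/(j+4) := by
    unfold jacobiC; push_cast
    have : (1:ℝ) + 1 + (j+1) + 1 ≠ 0 := by positivity
    have : (1:ℝ) + 1 + 2 * (j+1) ≠ 0 := by positivity
    field_simp; ring
  rw [jacobiP, hA, hB, hC]; ring

lemma jacobiP_one_one_zero (x : ℝ) : jacobiP 1 1 0 x = 1 := by rw [jacobiP]

lemma jacobiP_one_one_one (x : ℝ) : jacobiP 1 1 1 x = 2 * x := by rw [jacobiP]; ring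

/-- `P_j^{(1,1)}` as an element of `ℝ[X]`. -/
noncomputable def jacobiPoly : ℕ → Polynomial ℝ
  | 0 => 1
  | 1 => Polynomial.C 2 * Polynomial.X
  | (j+2) => Polynomial.C ((2*j+5)*(j+3)/((j+2)*(j+4)) : ℝ) * Polynomial.X * jacobiPoly (j+1)
        - Polynomial.C ((j+3)/(j+4) : ℝ) * jacobiPoly j

lemma jacobiPoly_eval (j : ℕ) (x : ℝ) : (jacobiPoly j).eval x = jacobiP 1 1 j x := by
  induction j using Nat.twoStepInduction with
  | zero => simp [jacobiPoly, jacobiP_one_one_zero]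
  | one => simp [jacobiPoly, jacobiP_one_one_one]
  | more j h0 h1 => simp [jacobiPoly, jacobiP_one_one_rec, h0, h1]

lemma jacobiPoly_natDegree_le (j : ℕ) : (jacobiPoly j).natDegree ≤ j := by
  induction j using Nat.twoStepInduction with
  | zero => simp [jacobiPoly]
  | one => exact (Polynomial.natDegree_C_mul_le _ _).trans Polynomial.natDegree_X_le
  | more j h0 h1 =>
    rw [jacobiPoly]
    refine (Polynomial.natDegree_sub_le _ _).trans (max_le ?_ ?_)
    · refine Polynomial.natDegree_mul_le.trans ?_
      have := (Polynomial.natDegree_C_mul_le ((2*j+5)*(j+3)/((j+2)*(j+4)) : ℝ)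
        Polynomial.X).trans Polynomial.natDegree_X_le
      omega
    · exact (Polynomial.natDegree_C_mul_le _ _).trans (by omega)

/-- The derivative of `P_j^{(1,1)}`. -/
noncomputable def jacobiD (j : ℕ) (x : ℝ) : ℝ := (jacobiPoly j).derivative.eval x

lemma hasDerivAt_jacobiP (j : ℕ) (x : ℝ) :
    HasDerivAt (jacobiP 1 1 j) (jacobiD j x) x := by
  have h := (jacobiPoly j).hasDerivAt x
  rwa [funext (jacobiPoly_eval j)] at h

lemma continuous_jacobiP (j : ℕ) : Continuous (jacobiP 1 1 j) := by
  rw [← funext (jacobiPoly_eval j)]; exact (jacobiPoly j).continuous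

/-- The function `S_n = (n+3) x P_n - (n+1)(n+3)/(n+2) P_{n+1}`, which equals
`(1-x²) P_n'`. -/
noncomputable def jacobiS (n : ℕ) (x : ℝ) : ℝ :=
  (n+3) * x * jacobiP 1 1 n x - (n+1)*(n+3)/(n+2) * jacobiP 1 1 (n+1) x

/-- The two first-order relations are proved together because the inductive step for the second
uses both. -/
lemma structure_relations (n : ℕ) (x : ℝ) :
    (1 - x^2) * jacobiD n x = jacobiS n x ∧
    (1 - x^2) * jacobiD (n+1) x =
      -(n+1) * x * jacobiP 1 1 (n+1) x + (n+2) * jacobiP 1 1 n x := by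
  induction n with
  | zero =>
    constructor
    · simp [jacobiD, jacobiPoly, jacobiS, jacobiP_one_one_zero, jacobiP_one_one_one]; ring
    · simp [jacobiD, jacobiPoly, jacobiP_one_one_zero, jacobiP_one_one_one]; ring
  | succ n ih =>
    obtain ⟨h0, h1⟩ := ih
    have hD : jacobiD (n+2) x =
        (2*n+5)*(n+3)/((n+2)*(n+4)) * (jacobiP 1 1 (n+1) x + x * jacobiD (n+1) x)
          - (n+3)/(n+4) * jacobiD n x := by
      simp [jacobiD, jacobiPoly, jacobiPoly_eval]; ring
    constructor
    · rw [h1, jacobiS, jacobiP_one_one_rec]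
      push_cast
      have : (n:ℝ) + 1 + 2 ≠ 0 := by positivity
      field_simp; ring
    · have e : (1 - x^2) * jacobiD (n+2) x =
        (2*n+5)*(n+3)/((n+2)*(n+4)) *
            ((1 - x^2) * jacobiP 1 1 (n+1) x + x * ((1 - x^2) * jacobiD (n+1) x))
          - (n+3)/(n+4) * ((1 - x^2) * jacobiD n x) := by rw [hD]; ring
      rw [e, h0, h1, jacobiS, jacobiP_one_one_rec]
      push_cast
      field_simp; ring

/-- The Sturm–Liouville equation `((1-x²)² P_n')' = -n(n+3) (1-x²) P_n`, with `(1-x²) P_n'`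
written as `S_n`. -/
lemma hasDerivAt_sturmLiouville (n : ℕ) (x : ℝ) :
    HasDerivAt (fun y => (1 - y^2) * jacobiS n y)
      (-(n*(n+3)) * ((1 - x^2) * jacobiP 1 1 n x)) x := by
  obtain ⟨h0, h1⟩ := structure_relations n x
  have hq : HasDerivAt (fun y : ℝ => 1 - y^2) (-(2*x)) x := by
    simpa using (hasDerivAt_pow 2 x).const_sub 1
  have hS : HasDerivAt (jacobiS n)
      ((n+3) * 1 * jacobiP 1 1 n x + (n+3) * x * jacobiD n x
        - (n+1)*(n+3)/(n+2) * jacobiD (n+1) x) x :=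
    ((((hasDerivAt_id x).const_mul ((n:ℝ)+3)).mul (hasDerivAt_jacobiP n x)).sub
      ((hasDerivAt_jacobiP (n+1) x).const_mul _))
  refine (hq.mul hS).congr_deriv ?_
  have e : (1 - x^2) * ((n+3) * 1 * jacobiP 1 1 n x + (n+3) * x * jacobiD n x
        - (n+1)*(n+3)/(n+2) * jacobiD (n+1) x) =
      (1 - x^2) * ((n+3) * jacobiP 1 1 n x) + (n+3) * x * ((1 - x^2) * jacobiD n x)
        - (n+1)*(n+3)/(n+2) * ((1 - x^2) * jacobiD (n+1) x) := by ring
  rw [e, h0, h1, jacobiS]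
  field_simp; ring

/-- The inner product of `P_i^{(1,1)}` and `P_j^{(1,1)}` for the weight `(1-x)(1+x)`. -/
noncomputable def jacobiIP (i j : ℕ) : ℝ :=
  ∫ x in (-1:ℝ)..1, (1-x)*(1+x)*(jacobiP 1 1 i x * jacobiP 1 1 j x)

lemma jacobiIP_of_ne {i j : ℕ} (hij : i ≠ j) : jacobiIP i j = 0 := by
  have hd : ∀ x : ℝ, HasDerivAt
      (fun y => (1 - y^2) * jacobiS i y * jacobiP 1 1 j y
        - (1 - y^2) * jacobiS j y * jacobiP 1 1 i y)
      (((j:ℝ)*(j+3) - i*(i+3)) * ((1-x)*(1+x)*(jacobiP 1 1 i x * jacobiP 1 1 j x))) x := by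
    intro x
    refine (((hasDerivAt_sturmLiouville i x).mul (hasDerivAt_jacobiP j x)).sub
      ((hasDerivAt_sturmLiouville j x).mul (hasDerivAt_jacobiP i x))).congr_deriv ?_
    rw [← (structure_relations i x).1, ← (structure_relations j x).1]
    ring
  have hc : Continuous fun x : ℝ =>
      ((j:ℝ)*(j+3) - i*(i+3)) * ((1-x)*(1+x)*(jacobiP 1 1 i x * jacobiP 1 1 j x)) := by
    have := continuous_jacobiP i
    have := continuous_jacobiP j
    fun_prop
  have h := intervalIntegral.integral_eq_sub_of_hasDerivAt (a := -1) (b := 1)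
    (fun x _ => hd x) (hc.intervalIntegrable _ _)
  rw [intervalIntegral.integral_const_mul] at h
  have hne : (j:ℝ)*(j+3) - i*(i+3) ≠ 0 := by
    have e : (j:ℝ)*(j+3) - i*(i+3) = (j - i) * (i + j + 3) := by ring
    rw [e]
    exact mul_ne_zero (sub_ne_zero.mpr (by exact_mod_cast hij.symm)) (by positivity)
  norm_num at h
  exact h.resolve_left hne

/-- The integral `∫ (1-x²) x P_{j+1} P_k`, computed from the recurrence for `x P_{j+1}`. -/
lemma integral_x_mul (j k : ℕ) :
    (2*j+5)*(j+3)/((j+2)*(j+4)) *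
      (∫ x in (-1:ℝ)..1, (1-x)*(1+x)*(x * (jacobiP 1 1 (j+1) x * jacobiP 1 1 k x))) =
    jacobiIP (j+2) k + (j+3)/(j+4) * jacobiIP j k := by
  have h0 := continuous_jacobiP j
  have h2 := continuous_jacobiP (j+2)
  have hk := continuous_jacobiP k
  rw [jacobiIP, jacobiIP, ← intervalIntegral.integral_const_mul,
    ← intervalIntegral.integral_const_mul, ← intervalIntegral.integral_add
      (Continuous.intervalIntegrable (by fun_prop) _ _)
      (Continuous.intervalIntegrable (by fun_prop) _ _)]
  congr 1
  ext x
  rw [jacobiP_one_one_rec]; ring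

lemma jacobiIP_zero : jacobiIP 0 0 = 4/3 := by
  have e : jacobiIP 0 0 = ∫ x in (-1:ℝ)..1, (1 - x^2) := by
    unfold jacobiIP; congr 1; ext x; rw [jacobiP_one_one_zero]; ring
  rw [e, intervalIntegral.integral_sub (by simp)
    (Continuous.intervalIntegrable (by fun_prop) _ _)]
  norm_num [integral_pow]

lemma jacobiIP_self (j : ℕ) : jacobiIP j j = 8*(j+1)/((j+2)*(2*j+3)) := by
  induction j with
  | zero => rw [jacobiIP_zero]; norm_num
  | succ j ih =>
    have h1 := integral_x_mul j j
    rw [jacobiIP_of_ne (by omega : j+2 ≠ j), ih] at h1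
    -- The same integral with the factor `x` absorbed by `P_j`; for `j = 0` this is `P_1 = 2x`.
    have h2 : (2*j+3)*(j+2)/((j+1)*(j+3)) *
        (∫ x in (-1:ℝ)..1, (1-x)*(1+x)*(x * (jacobiP 1 1 (j+1) x * jacobiP 1 1 j x))) =
        jacobiIP (j+1) (j+1) := by
      cases j with
      | zero =>
        rw [jacobiIP, ← intervalIntegral.integral_const_mul]
        congr 1; ext x
        simp only [zero_add, jacobiP_one_one_zero, jacobiP_one_one_one]
        push_cast; ring
      | succ m =>
        have h := integral_x_mul m (m+2)
        rw [jacobiIP_of_ne (by omega : m ≠ m+2), mul_zero, add_zero] at h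
        rw [← h]
        simp_rw [mul_comm (jacobiP 1 1 (m+1+1) _)]
        push_cast; ring
    rw [← h2]
    rw [mul_comm, ← eq_div_iff (by positivity)] at h1
    rw [h1]; push_cast
    have : (j:ℝ) + 1 + 2 ≠ 0 := by positivity
    have : 2 * ((j:ℝ) + 1) + 3 ≠ 0 := by positivity
    field_simp; ring

/-- Explicit inverse of the mass matrix. If the nodes `ξ_0,…,ξ_n ⊂ (-1,1)`
and weights `w_0,…,w_n` give a quadrature rule exact for the weight `(1-x)(1+x)` on
polynomials of degree at most `2n`, then the mass matrix `M` with entries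
`M_{ij} = φ_i(ξ̂_j)`, `ξ̂_j = (ℓ/2)(ξ_j + 1)`, satisfies `M·N = 1` where
`N_{ij} = (ℓ w_i/(2(1-ξ_i)(1+ξ_i))) P_j^{(1,1)}(ξ_i)`; in particular `M` is invertible
with `M⁻¹ = N`. -/
theorem mass_matrix_inverse
    (ℓ : ℝ) (hℓ : 0 < ℓ) (n : ℕ) (ξ w : Fin (n+1) → ℝ)
    (hξ : ∀ k, ξ k ∈ Set.Ioo (-1:ℝ) 1)
    (hquad : ∀ p : Polynomial ℝ, p.natDegree ≤ 2*n →
      ∑ k, w k * p.eval (ξ k) = ∫ x in (-1:ℝ)..1, (1-x)*(1+x)*p.eval x)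
    (M N : Matrix (Fin (n+1)) (Fin (n+1)) ℝ)
    (hM : ∀ i j, M i j = phiFun ℓ (i : ℕ) (ℓ/2 * (ξ j + 1)))
    (hN : ∀ i j, N i j = ℓ * w i / (2*(1 - ξ i)*(1 + ξ i)) * jacobiP 1 1 (j : ℕ) (ξ i)) :
    M * N = 1 ∧ IsUnit M ∧ M⁻¹ = N := by
  have hprod : M * N = 1 := by
    ext i j
    have hterm : ∀ k, M i k * N k j =
        lamCoef ℓ i * ℓ^3 / 8 * (w k * (jacobiPoly i * jacobiPoly j).eval (ξ k)) := by
      intro k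
      have hp : 1 + ξ k ≠ 0 := by linarith [(hξ k).1]
      have hm : 1 - ξ k ≠ 0 := by linarith [(hξ k).2]
      have harg : 2 * (ℓ/2 * (ξ k + 1)) / ℓ - 1 = ξ k := by field_simp; ring
      rw [hM, hN, phiFun, harg, Polynomial.eval_mul, jacobiPoly_eval, jacobiPoly_eval]
      field_simp; ring
    have hdeg : (jacobiPoly i * jacobiPoly j).natDegree ≤ 2*n := by
      have := jacobiPoly_natDegree_le i
      have := jacobiPoly_natDegree_le j
      have := Polynomial.natDegree_mul_le (p := jacobiPoly i) (q := jacobiPoly j)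
      omega
    have hIP : ∑ k, w k * (jacobiPoly i * jacobiPoly j).eval (ξ k) = jacobiIP i j := by
      rw [hquad _ hdeg, jacobiIP]
      simp only [Polynomial.eval_mul, jacobiPoly_eval]
    rw [Matrix.mul_apply, Finset.sum_congr rfl fun k _ => hterm k, ← Finset.mul_sum, hIP]
    by_cases hij : i = j
    · subst hij
      rw [jacobiIP_self, Matrix.one_apply_eq, lamCoef]
      field_simp
    · rw [jacobiIP_of_ne (fun h => hij (Fin.ext h)), Matrix.one_apply_ne hij, mul_zero]
  exact ⟨hprod, IsUnit.of_mul_eq_one N hprod, Matrix.inv_eq_right_inv hprod⟩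
end
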